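/- For every integer g ≥ 2, the diagonal action of Sp(2g,ℤ) on (ℝ/ℤ)^{2g} × ℝ^{2g}, where M ∈ Sp(2g,ℤ) sends (x mod ℤ^{2g}, y) to (Mx mod ℤ^{2g}, My), is ergodic with respect to the product of the Haar measure on the torus (ℝ/ℤ)^{2g} and the Lebesgue measure on ℝ^{2g}. -/

import Mathlib

open Matrix MeasureTheory

/-!
Split the coordinates of `(x, y)` into two Lagrangian halves `u` and `v`, each consisting of a part
of `x` and the corresponding part of `y`. For fixed `v`, the integral shears `(1 S; 0 1)` and the
lattice of the torus act on `u` by translations. A nonzero linear functional that takes integral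
values on all of these translations gives a nontrivial polynomial relation with integral
coefficients between the coordinates of `v`, which fails for almost every `v`; as a closed subgroup
of a vector space is everything once only the zero functional is integral on it, the translations
are dense for almost every `v`. A set invariant under a dense group of translations is null or
conull by Steinhaus' theorem. The shears `(1 0; S 1)` do the same with `u` and `v` exchanged, and a
measurable set almost all of whose slices in both directions are null or conull is itself null or
conull.
-/

open Filter Set
open scoped Pointwise Topology

section Ergodicity

theorem eventuallyConst_ae_prod_of_slices {α β : Type*} [MeasurableSpace α] [MeasurableSpace β]
    {μ : Measure α} {ν : Measure β} [SFinite μ] [SFinite ν] {s : Set (α × β)}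
    (hs : MeasurableSet s) (hleft : ∀ᵐ x ∂μ, EventuallyConst (Prod.mk x ⁻¹' s) (ae ν))
    (hright : ∀ᵐ y ∂ν, EventuallyConst ((fun x ↦ (x, y)) ⁻¹' s) (ae μ)) :
    EventuallyConst s (ae (μ.prod ν)) := by
  simp only [eventuallyConst_set, mem_preimage] at hleft hright ⊢
  set full : Set β := {y | ∀ᵐ x ∂μ, (x, y) ∈ s}
  have hfull : MeasurableSet full :=
    measurableSet_eq_fun (measurable_measure_prodMk_right hs.compl) measurable_const
  by_cases hnull : ∀ᵐ y ∂ν, y ∉ full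
  · right
    refine (Measure.ae_prod_mem_iff_ae_ae_mem hs.compl).2 ((Measure.ae_ae_comm hs.compl).2 ?_)
    filter_upwards [hright, hnull] with y hy hy_full using hy.resolve_left hy_full
  · left
    rw [Measure.ae_prod_mem_iff_ae_ae_mem hs]
    have hswap : ∀ᵐ x ∂μ, ∀ᵐ y ∂ν, y ∈ full → (x, y) ∈ s := by
      refine (Measure.ae_ae_comm ((measurable_snd hfull).imp hs)).2 (ae_of_all _ fun y ↦ ?_)
      by_cases hy : y ∈ full
      · exact Eventually.mono hy fun x hx _ ↦ hx
      · simp [hy]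
    filter_upwards [hleft, hswap] with x hx hx_full
    refine hx.resolve_right fun hempty ↦ hnull ?_
    filter_upwards [hempty, hx_full] with y hy hy_full hmem using hy (hy_full hmem)

variable {G : Type*} [AddGroup G] [TopologicalSpace G] [IsTopologicalAddGroup G]
  [LocallyCompactSpace G] [MeasurableSpace G] [BorelSpace G]
  [SecondCountableTopology G] {μ : Measure G} [μ.IsAddHaarMeasure] {s : Set G}

theorem ae_le_preimage_vadd_of_dense_stabilizer (hs : MeasurableSet s)
    (hd : Dense (AddAction.stabilizer G s : Set G)) (b : G) : s ≤ᵐ[μ] (b +ᵥ ·) ⁻¹' s := by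
  set K := s \ (b +ᵥ ·) ⁻¹' s
  suffices hK : μ K = 0 from ae_le_set.2 hK
  by_contra hK
  have hnhds : (fun d ↦ -b + d) ⁻¹' (K - K) ∈ 𝓝 b :=
    ContinuousAt.preimage_mem_nhds (by fun_prop) <| by
      simpa using Measure.sub_mem_nhds_zero_of_addHaar_pos μ K
        (hs.diff (measurable_const_vadd b hs)) (pos_iff_ne_zero.2 hK)
  obtain ⟨d, hd, k, hk, k', hk', hsub⟩ := hd.inter_nhds_nonempty hnhds
  have hbk : b + k = d + k' := by
    rw [← sub_add_cancel k k', ← add_assoc, show k - k' = -b + d from hsub, add_neg_cancel_left]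
  apply hk.2
  simpa only [mem_preimage, vadd_eq_add, hbk] using
    (AddAction.mem_stabilizer_set.1 hd k').2 hk'.1

theorem eventuallyConst_ae_of_dense_stabilizer (hs : MeasurableSet s)
    (hd : Dense (AddAction.stabilizer G s : Set G)) : EventuallyConst s (ae μ) := by
  refine aeconst_of_forall_preimage_vadd_ae_eq G hs.nullMeasurableSet fun b ↦ ?_
  refine (Filter.EventuallyLE.antisymm ?_ (ae_le_preimage_vadd_of_dense_stabilizer hs hd b))
  rw [← compl_compl s]
  exact (ae_le_preimage_vadd_of_dense_stabilizer hs.compl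
    (hd.mono fun d hd ↦ AddAction.mem_stabilizer_set.2 fun x ↦
      not_congr (AddAction.mem_stabilizer_set.1 hd x)) b).compl

end Ergodicity

section Analytic

theorem ae_ne_zero_of_analyticOnNhd {E F : Type*} [NormedAddCommGroup E] [NormedSpace ℝ E]
    [FiniteDimensional ℝ E] [MeasurableSpace E] [BorelSpace E] [NormedAddCommGroup F]
    [NormedSpace ℝ F] (μ : Measure E) [μ.IsAddHaarMeasure] {f : E → F}
    (hf : AnalyticOnNhd ℝ f univ) {x₀ : E} (hx₀ : f x₀ ≠ 0) : ∀ᵐ x ∂μ, f x ≠ 0 := by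
  have hcont : Continuous f := continuousOn_univ.1 hf.continuousOn
  have hopen : IsOpen {x | f x ≠ 0} := isOpen_ne_fun hcont continuous_const
  have hline (v : E) : ∀ᵐ t : ℝ, f (x₀ + t • v) ≠ 0 := by
    have han : AnalyticOnNhd ℝ (fun t : ℝ ↦ f (x₀ + t • v)) univ := fun t _ ↦
      (hf _ (mem_univ _)).fun_comp (by fun_prop)
    have := han.preimage_zero_mem_codiscrete (x := 0) (by simpa using hx₀)
    rw [← Measure.restrict_univ (μ := volume)]
    exact ae_restrict_le_codiscreteWithin MeasurableSet.univ this
  have hmeas : MeasurableSet {p : E × ℝ | f (x₀ + p.2 • p.1) ≠ 0} :=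
    (hopen.preimage (f := fun p : E × ℝ ↦ x₀ + p.2 • p.1) (by fun_prop)).measurableSet
  have hscaled : ∀ᵐ t : ℝ, ∀ᵐ v ∂μ, f (x₀ + t • v) ≠ 0 :=
    (Measure.ae_ae_comm hmeas).1 (ae_of_all _ hline)
  obtain ⟨t, ht, ht0⟩ := (hscaled.and (Measure.ae_ne volume 0)).exists
  have hsurj : Function.Surjective (t • LinearMap.id : E →ₗ[ℝ] E) := fun x ↦
    ⟨t⁻¹ • x, by simp [smul_smul, ht0]⟩
  have htranslate : ∀ᵐ v ∂μ, f (x₀ + v) ≠ 0 :=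
    (ae_comp_linearMap_mem_iff _ μ μ hsurj
      (hopen.preimage (continuous_const_add x₀)).measurableSet).1 ht
  simpa using (quasiMeasurePreserving_add_left μ (-x₀)).ae htranslate

end Analytic

section ClosedSubgroups

/-- The lineality space of an additive subgroup of a real vector space: its largest vector
subspace. -/
def linealitySpace {E : Type*} [AddCommGroup E] [Module ℝ E] (H : AddSubgroup E) :
    Submodule ℝ E where
  carrier := {v | ∀ t : ℝ, t • v ∈ H}
  zero_mem' t := by simp only [smul_zero, H.zero_mem]
  add_mem' hv hw t := by simpa only [smul_add] using H.add_mem (hv t) (hw t)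
  smul_mem' c v hv t := by simpa only [smul_smul] using hv (t * c)

theorem mem_of_mem_linealitySpace {E : Type*} [AddCommGroup E] [Module ℝ E] {H : AddSubgroup E}
    {v : E} (hv : v ∈ linealitySpace H) : v ∈ H := by
  simpa only [one_smul] using hv 1

theorem linealitySpace_map_mkQ {E : Type*} [AddCommGroup E] [Module ℝ E] (H : AddSubgroup E) :
    linealitySpace (H.map (linealitySpace H).mkQ.toAddMonoidHom) = ⊥ := by
  rw [eq_bot_iff]
  intro x hx
  obtain ⟨v, rfl⟩ := (linealitySpace H).mkQ_surjective x
  refine (Submodule.Quotient.mk_eq_zero _).2 fun t ↦ ?_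
  obtain ⟨w, hw, hwv⟩ := hx t
  have hdiff : w - t • v ∈ linealitySpace H := (Submodule.Quotient.eq _).1 hwv
  simpa using H.sub_mem hw (mem_of_mem_linealitySpace hdiff)

variable {E : Type*} [NormedAddCommGroup E] [NormedSpace ℝ E]

theorem mem_linealitySpace_of_tendsto {H : AddSubgroup E} (hH : IsClosed (H : Set E))
    {w : ℕ → E} (hw : ∀ n, w n ∈ H) (hw0 : Tendsto w atTop (𝓝 0)) {u : E}
    (hu : Tendsto (fun n ↦ ‖w n‖⁻¹ • w n) atTop (𝓝 u)) : u ∈ linealitySpace H := by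
  intro t
  have hfract : Tendsto (fun n ↦ Int.fract (t / ‖w n‖) • w n) atTop (𝓝 0) := by
    refine squeeze_zero_norm (fun n ↦ ?_) (tendsto_zero_iff_norm_tendsto_zero.1 hw0)
    rw [norm_smul, Real.norm_of_nonneg (Int.fract_nonneg _)]
    exact mul_le_of_le_one_left (norm_nonneg _) (Int.fract_lt_one _).le
  have hfloor : Tendsto (fun n ↦ ⌊t / ‖w n‖⌋ • w n) atTop (𝓝 (t • u)) := by
    rw [← sub_zero (t • u)]
    refine ((hu.const_smul t).sub hfract).congr fun n ↦ ?_
    rw [smul_smul, ← sub_smul, ← div_eq_mul_inv, Int.self_sub_fract, Int.cast_smul_eq_zsmul]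
  exact hH.mem_of_tendsto hfloor (.of_forall fun n ↦ H.zsmul_mem (hw n) _)

variable [FiniteDimensional ℝ E]

theorem discreteTopology_of_linealitySpace_eq_bot {H : AddSubgroup E}
    (hH : IsClosed (H : Set E)) (hbot : linealitySpace H = ⊥) : DiscreteTopology H := by
  by_contra hdisc
  have hsmall (n : ℕ) : ∃ w ∈ H, w ≠ 0 ∧ ‖w‖ < 1 / ((n : ℝ) + 1) := by
    by_contra! hlarge
    exact hdisc <| .of_forall_le_norm (r := 1 / ((n : ℝ) + 1)) (by positivity) fun w hw ↦
      hlarge w w.2 (by simpa using hw)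
  choose w hwH hw_ne hw_lt using hsmall
  have hw0 : Tendsto w atTop (𝓝 0) :=
    squeeze_zero_norm (fun n ↦ (hw_lt n).le) tendsto_one_div_add_atTop_nhds_zero_nat
  have : ProperSpace E := FiniteDimensional.proper ℝ E
  obtain ⟨u, hu, φ, hφ, hlim⟩ := (isCompact_sphere (0 : E) 1).tendsto_subseq
    (x := fun n ↦ ‖w n‖⁻¹ • w n) fun n ↦ by simp [norm_smul, hw_ne n]
  have hmem : u ∈ linealitySpace H :=
    mem_linealitySpace_of_tendsto hH (fun n ↦ hwH (φ n)) (hw0.comp hφ.tendsto_atTop) hlim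
  rw [hbot, Submodule.mem_bot] at hmem
  simp [hmem] at hu

theorem subsingleton_of_discrete_of_int_valued_eq_zero {H : AddSubgroup E} [DiscreteTopology H]
    (h : ∀ ℓ : E →ₗ[ℝ] ℝ, (∀ x ∈ H, ∃ n : ℤ, ℓ x = n) → ℓ = 0) : Subsingleton E := by
  let L : Submodule ℤ E := AddSubgroup.toIntSubmodule H
  have hspan : Submodule.span ℝ (H : Set E) = ⊤ := by
    by_contra hne
    obtain ⟨ℓ, hℓ, hker⟩ := Submodule.exists_le_ker_of_lt_top _ (lt_top_iff_ne_top.2 hne)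
    exact hℓ (h ℓ fun x hx ↦ ⟨0, by simpa using hker (Submodule.subset_span hx)⟩)
  have : DiscreteTopology L := ‹DiscreteTopology H›
  have : IsZLattice ℝ L := ⟨hspan⟩
  have : Module.Free ℤ L := ZLattice.module_free ℝ L
  let b := Module.Free.chooseBasis ℤ L
  have hcoord (i) : (b.ofZLatticeBasis ℝ L).coord i = 0 :=
    h _ fun x hx ↦ ⟨b.repr ⟨x, hx⟩ i, b.ofZLatticeBasis_repr_apply ℝ L ⟨x, hx⟩ i⟩
  exact subsingleton_of_forall_eq 0 fun x ↦ (b.ofZLatticeBasis ℝ L).ext_elem fun i ↦ by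
    simpa using LinearMap.congr_fun (hcoord i) x

theorem eq_top_of_isClosed_of_int_valued_eq_zero {H : AddSubgroup E} (hH : IsClosed (H : Set E))
    (h : ∀ ℓ : E →ₗ[ℝ] ℝ, (∀ x ∈ H, ∃ n : ℤ, ℓ x = n) → ℓ = 0) : H = ⊤ := by
  set V := linealitySpace H
  have : IsClosed (V : Set E) := V.closed_of_finiteDimensional
  set H' : AddSubgroup (E ⧸ V) := H.map V.mkQ.toAddMonoidHom
  have hpre (x : E) : V.mkQ x ∈ H' ↔ x ∈ H := by
    refine ⟨fun ⟨y, hy, hyx⟩ ↦ ?_, fun hx ↦ ⟨x, hx, rfl⟩⟩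
    have hdiff : y - x ∈ V := (Submodule.Quotient.eq _).1 hyx
    simpa using H.sub_mem hy (mem_of_mem_linealitySpace hdiff)
  have hclosed : IsClosed (H' : Set (E ⧸ V)) := by
    rw [← V.isOpenQuotientMap_mkQ.isQuotientMap.isClosed_preimage]
    convert hH using 1
    ext x
    exact hpre x
  have := discreteTopology_of_linealitySpace_eq_bot hclosed (linealitySpace_map_mkQ H)
  have : Subsingleton (E ⧸ V) :=
    subsingleton_of_discrete_of_int_valued_eq_zero (H := H') fun ℓ hℓ ↦ by
      have hcomp : ℓ ∘ₗ V.mkQ = 0 := h _ fun x hx ↦ hℓ _ ((hpre x).2 hx)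
      exact (LinearMap.cancel_right V.mkQ_surjective).1 (hcomp.trans (LinearMap.zero_comp _).symm)
  have htop : V = ⊤ := Submodule.Quotient.subsingleton_iff.1 this
  exact eq_top_iff.2 fun x _ ↦ mem_of_mem_linealitySpace (htop ▸ Submodule.mem_top : x ∈ V)

theorem dense_of_int_valued_eq_zero {H : AddSubgroup E}
    (h : ∀ ℓ : E →ₗ[ℝ] ℝ, (∀ x ∈ H, ∃ n : ℤ, ℓ x = n) → ℓ = 0) : Dense (H : Set E) := by
  have htop : H.topologicalClosure = ⊤ :=
    eq_top_of_isClosed_of_int_valued_eq_zero H.isClosed_topologicalClosure fun ℓ hℓ ↦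
      h ℓ fun x hx ↦ hℓ x (H.le_topologicalClosure hx)
  rw [dense_iff_closure_eq, ← AddSubgroup.topologicalClosure_coe, htop, AddSubgroup.coe_top]

end ClosedSubgroups

section ShearTranslations

/-- The pairs `((x i)ᵢ, (y i)ᵢ)` obtained from a point `(x, y)` of `ℝ^(n ⊕ n) × ℝ^(n ⊕ n)` by
letting `i` run through one of the two copies of `n`, each of which spans a Lagrangian subspace. -/
abbrev LagrangianPair (n : Type*) : Type _ := (n → ℝ) × (n → ℝ)

variable {n : Type*} [Fintype n]

instance isAddHaarMeasure_volume_pi_prod {m : Type*} [Fintype m] :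
    (volume : Measure ((m → ℝ) × (n → ℝ))).IsAddHaarMeasure :=
  Measure.prod.instIsAddHaarMeasure volume volume

/-- The group of translations of the coordinates in the first copy of `n` that is generated by the
integral translations of `x` and, with the coordinates `v` in the second copy of `n` fixed, by the
integral symplectic shears `(1 S; 0 1)`. -/
def shearTranslations (v : LagrangianPair n) : AddSubgroup (LagrangianPair n) :=
  AddSubgroup.closure
    (range (fun k : n → ℤ ↦ ((fun i ↦ (k i : ℝ)), 0)) ∪
      {w | ∃ S : Matrix n n ℤ, S.IsSymm ∧
        w = (S.map (Int.castRingHom ℝ) *ᵥ v.1, S.map (Int.castRingHom ℝ) *ᵥ v.2)})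

theorem shearTranslations_le_stabilizer {v : LagrangianPair n} {s : Set (LagrangianPair n)}
    (htrans : ∀ (k : n → ℤ) (u : LagrangianPair n), ((fun i ↦ (k i : ℝ)), 0) + u ∈ s ↔ u ∈ s)
    (hshear : ∀ S : Matrix n n ℤ, S.IsSymm → ∀ u : LagrangianPair n,
      (S.map (Int.castRingHom ℝ) *ᵥ v.1, S.map (Int.castRingHom ℝ) *ᵥ v.2) + u ∈ s ↔ u ∈ s) :
    shearTranslations v ≤ AddAction.stabilizer (LagrangianPair n) s := by
  refine (AddSubgroup.closure_le _).2 ?_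
  rintro w (⟨k, rfl⟩ | ⟨S, hS, rfl⟩)
  · exact AddAction.mem_stabilizer_set.2 (htrans k)
  · exact AddAction.mem_stabilizer_set.2 (hshear S hS)

theorem exists_dotProduct_add_dotProduct_eq (ℓ : LagrangianPair n →ₗ[ℝ] ℝ) :
    ∃ a b : n → ℝ, ∀ w, ℓ w = a ⬝ᵥ w.1 + b ⬝ᵥ w.2 := by
  classical
  refine ⟨(dotProductEquiv ℝ n).symm (ℓ ∘ₗ .inl ℝ _ _),
    (dotProductEquiv ℝ n).symm (ℓ ∘ₗ .inr ℝ _ _), fun w ↦ ?_⟩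
  simp_rw [← dotProductEquiv_apply_apply, LinearEquiv.apply_symm_apply]
  simp [← map_add]

/- If the quadratic form `x ↦ (a ⬝ x) * (v.1 ⬝ x) + (b ⬝ x) * (v.2 ⬝ x)` has coefficients `m`, `l`,
`k` on the coordinates `i`, `j`, this relation is its value at `v.2 j • eᵢ - v.2 i • eⱼ`, a vector
orthogonal to `v.2`. -/
theorem ae_quadratic_relation_trivial {i j : n} (hij : i ≠ j) :
    ∀ᵐ v : LagrangianPair n, ∀ aᵢ aⱼ m k l : ℤ,
      (aᵢ * v.2 j - aⱼ * v.2 i) * (v.1 i * v.2 j - v.1 j * v.2 i) =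
        m * v.2 j ^ 2 - l * (v.2 i * v.2 j) + k * v.2 i ^ 2 → aᵢ = 0 ∧ m = 0 := by
  classical
  simp only [ae_all_iff]
  intro aᵢ aⱼ m k l
  by_cases htriv : aᵢ = 0 ∧ m = 0
  · simp [htriv]
  let f (v : LagrangianPair n) : ℝ :=
    (aᵢ * v.2 j - aⱼ * v.2 i) * (v.1 i * v.2 j - v.1 j * v.2 i) -
      (m * v.2 j ^ 2 - l * (v.2 i * v.2 j) + k * v.2 i ^ 2)
  have hf : AnalyticOnNhd ℝ f univ :=
    contDiff_omega_iff_analyticOnNhd.1 (by fun_prop)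
  have hf_ne : ∃ v, f v ≠ 0 := by
    by_cases hm : m = 0
    · refine ⟨(Pi.single i 1, Pi.single j 1), ?_⟩
      simpa [f, hij, hm] using htriv
    · exact ⟨(0, Pi.single j 1), by simpa [f, hij] using hm⟩
  obtain ⟨v₀, hv₀⟩ := hf_ne
  filter_upwards [ae_ne_zero_of_analyticOnNhd volume hf hv₀] with v hv hrel
  exact absurd (sub_eq_zero.2 hrel) hv

theorem ae_snd_ne_zero : ∀ᵐ v : LagrangianPair n, ∀ i, v.2 i ≠ 0 := by
  refine ae_all_iff.2 fun i ↦ ae_ne_zero_of_analyticOnNhd volume (x₀ := (0, 1)) ?_ (by simp)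
  exact contDiff_omega_iff_analyticOnNhd.1 (by fun_prop)

theorem dotProduct_map_single_mulVec [DecidableEq n] (c w : n → ℝ) (i j : n) :
    c ⬝ᵥ (single i j (1 : ℤ)).map (Int.castRingHom ℝ) *ᵥ w = c i * w j := by
  rw [Matrix.map_single, map_one, single_mulVec_eq, one_mul, dotProduct_smul,
    dotProduct_single_one, smul_eq_mul, mul_comm]

section IntegralFunctional

variable {v : LagrangianPair n} {a b : n → ℝ}
  (hval : ∀ w ∈ shearTranslations v, ∃ k : ℤ, a ⬝ᵥ w.1 + b ⬝ᵥ w.2 = k)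

include hval

theorem int_valued_fst_of_shearTranslations (i : n) : ∃ k : ℤ, a i = k := by
  classical
  obtain ⟨k, hk⟩ := hval _ (AddSubgroup.subset_closure (Or.inl ⟨Pi.single i 1, rfl⟩))
  refine ⟨k, ?_⟩
  simpa [Pi.single_apply, dotProduct] using hk

theorem int_valued_mulVec_of_shearTranslations {S : Matrix n n ℤ} (hS : S.IsSymm) :
    ∃ k : ℤ, a ⬝ᵥ S.map (Int.castRingHom ℝ) *ᵥ v.1 + b ⬝ᵥ S.map (Int.castRingHom ℝ) *ᵥ v.2 = k :=
  hval _ (AddSubgroup.subset_closure (Or.inr ⟨S, hS, rfl⟩))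

theorem int_valued_diag_of_shearTranslations (i : n) :
    ∃ m : ℤ, a i * v.1 i + b i * v.2 i = m := by
  classical
  have hS : (single i i (1 : ℤ)).IsSymm := transpose_single i i 1
  simpa only [dotProduct_map_single_mulVec] using int_valued_mulVec_of_shearTranslations hval hS

theorem int_valued_offDiag_of_shearTranslations (i j : n) :
    ∃ l : ℤ, a i * v.1 j + a j * v.1 i + (b i * v.2 j + b j * v.2 i) = l := by
  classical
  have hS : (single i j (1 : ℤ) + single j i 1).IsSymm := by simp [Matrix.IsSymm, add_comm]
  simpa only [Matrix.map_add _ (Int.castRingHom ℝ).map_add, add_mulVec, dotProduct_add,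
    dotProduct_map_single_mulVec] using int_valued_mulVec_of_shearTranslations hval hS

end IntegralFunctional

theorem ae_dense_shearTranslations [Nontrivial n] :
    ∀ᵐ v : LagrangianPair n, Dense (shearTranslations v : Set (LagrangianPair n)) := by
  have hgeneric : ∀ᵐ v : LagrangianPair n, ∀ i j : n, i ≠ j → ∀ aᵢ aⱼ m k l : ℤ,
      (aᵢ * v.2 j - aⱼ * v.2 i) * (v.1 i * v.2 j - v.1 j * v.2 i) =
        m * v.2 j ^ 2 - l * (v.2 i * v.2 j) + k * v.2 i ^ 2 → aᵢ = 0 ∧ m = 0 := by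
    simp only [ae_all_iff (ι := n), eventually_imp_distrib_left]
    exact fun i j hij ↦ ae_quadratic_relation_trivial hij
  filter_upwards [hgeneric, ae_snd_ne_zero] with v hrel hv
  refine dense_of_int_valued_eq_zero fun ℓ hℓ ↦ ?_
  obtain ⟨a, b, hab⟩ := exists_dotProduct_add_dotProduct_eq ℓ
  simp only [hab] at hℓ
  have hzero (i : n) : a i = 0 ∧ b i = 0 := by
    obtain ⟨j, hji⟩ := exists_ne i
    obtain ⟨aᵢ, haᵢ⟩ := int_valued_fst_of_shearTranslations hℓ i
    obtain ⟨aⱼ, haⱼ⟩ := int_valued_fst_of_shearTranslations hℓ j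
    obtain ⟨m, hm⟩ := int_valued_diag_of_shearTranslations hℓ i
    obtain ⟨k, hk⟩ := int_valued_diag_of_shearTranslations hℓ j
    obtain ⟨l, hl⟩ := int_valued_offDiag_of_shearTranslations hℓ i j
    obtain ⟨rfl, rfl⟩ := hrel i j hji.symm aᵢ aⱼ m k l (by
      rw [← haᵢ, ← haⱼ, ← hm, ← hk, ← hl]; ring)
    simpa [haᵢ, hv i] using hm
  obtain ⟨rfl, rfl⟩ : a = 0 ∧ b = 0 :=
    ⟨funext fun i ↦ (hzero i).1, funext fun i ↦ (hzero i).2⟩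
  exact LinearMap.ext fun w ↦ by simp [hab]

end ShearTranslations

section Slices

variable {n : Type*} [Fintype n] [Nontrivial n] {B : Set (LagrangianPair n × LagrangianPair n)}

theorem ae_eventuallyConst_slice (hB : MeasurableSet B)
    (hinv : ∀ v, shearTranslations v ≤
      AddAction.stabilizer (LagrangianPair n) ((fun u ↦ (u, v)) ⁻¹' B)) :
    ∀ᵐ v : LagrangianPair n, EventuallyConst ((fun u ↦ (u, v)) ⁻¹' B) (ae volume) := by
  filter_upwards [ae_dense_shearTranslations] with v hv
  exact eventuallyConst_ae_of_dense_stabilizer (measurable_prodMk_right hB) (hv.mono (hinv v))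

theorem eventuallyConst_of_shearTranslations_le_stabilizer (hB : MeasurableSet B)
    (hfst : ∀ v, shearTranslations v ≤
      AddAction.stabilizer (LagrangianPair n) ((fun u ↦ (u, v)) ⁻¹' B))
    (hsnd : ∀ u, shearTranslations u ≤
      AddAction.stabilizer (LagrangianPair n) (Prod.mk u ⁻¹' B)) :
    EventuallyConst B (ae volume) := by
  have hleft : ∀ᵐ u : LagrangianPair n, EventuallyConst (Prod.mk u ⁻¹' B) (ae volume) :=
    ae_eventuallyConst_slice (B := Prod.swap ⁻¹' B) (measurable_swap hB) hsnd
  exact eventuallyConst_ae_prod_of_slices hB hleft (ae_eventuallyConst_slice hB hfst)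

end Slices

section Symplectic

variable {n R : Type*} [Fintype n] [DecidableEq n] [CommRing R]

theorem fromBlocks_one_self_zero_one_mem_symplecticGroup {S : Matrix n n R} (hS : S.IsSymm) :
    fromBlocks 1 S 0 1 ∈ symplecticGroup n R := by
  simp [SymplecticGroup.mem_iff, Matrix.J, fromBlocks_transpose, fromBlocks_multiply, hS.eq]

theorem fromBlocks_one_zero_self_one_mem_symplecticGroup {S : Matrix n n R} (hS : S.IsSymm) :
    fromBlocks 1 0 S 1 ∈ symplecticGroup n R := by
  simp [SymplecticGroup.mem_iff, Matrix.J, fromBlocks_transpose, fromBlocks_multiply, hS.eq]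

theorem map_mem_symplecticGroup {R' : Type*} [CommRing R'] (f : R →+* R')
    {M : Matrix (n ⊕ n) (n ⊕ n) R} (hM : M ∈ symplecticGroup n R) :
    M.map f ∈ symplecticGroup n R' := by
  have hJ : (J n R).map f = J n R' := by
    simp [Matrix.J, fromBlocks_map, Matrix.map_neg]
  rw [SymplecticGroup.mem_iff] at hM ⊢
  rw [← hJ, ← transpose_map, ← Matrix.map_mul, ← Matrix.map_mul, hM]

end Symplectic

section Torus

/-- Reduction of a real vector modulo `1` in each coordinate. -/
def torusMk {ι : Type*} (x : ι → ℝ) : UnitAddTorus ι := fun i ↦ x i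

theorem measurable_torusMk {ι : Type*} : Measurable (torusMk : (ι → ℝ) → UnitAddTorus ι) :=
  measurable_pi_lambda _ fun i ↦ AddCircle.measurable_mk'.comp (measurable_pi_apply i)

theorem torusMk_intCast_add {ι : Type*} (k : ι → ℤ) (x : ι → ℝ) :
    torusMk ((fun i ↦ (k i : ℝ)) + x) = torusMk x := by
  ext i
  simp [torusMk]

theorem volume_absolutelyContinuous_map_torusMk {ι : Type*} [Fintype ι] :
    (volume : Measure (UnitAddTorus ι)) ≪ volume.map torusMk := by
  have hcube : MeasurePreserving (torusMk (ι := ι))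
      (Measure.pi fun _ ↦ volume.restrict (Ioc 0 (0 + 1))) volume :=
    measurePreserving_pi _ _ fun _ ↦ AddCircle.measurePreserving_mk 1 0
  rw [← hcube.map_eq, ← Measure.restrict_pi_pi]
  exact (Measure.absolutelyContinuous_of_le Measure.restrict_le_self).map measurable_torusMk

variable {n : Type*}

/-- The isomorphism assembling the coordinate pairs of the two copies of `n` into a point `(x, y)`
of `ℝ^(n ⊕ n) × ℝ^(n ⊕ n)`. -/
def lagrangianPairsEquiv (n : Type*) :
    (LagrangianPair n × LagrangianPair n) ≃ₗ[ℝ] (n ⊕ n → ℝ) × (n ⊕ n → ℝ) :=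
  (LinearEquiv.prodProdProdComm ℝ _ _ _ _).trans <|
    (LinearEquiv.sumArrowLequivProdArrow n n ℝ ℝ).symm.prodCongr
      (LinearEquiv.sumArrowLequivProdArrow n n ℝ ℝ).symm

/-- The point of `(ℝ/ℤ)^(n ⊕ n) × ℝ^(n ⊕ n)` with the given coordinate pairs. -/
def torusPoint (z : LagrangianPair n × LagrangianPair n) :
    UnitAddTorus (n ⊕ n) × (n ⊕ n → ℝ) :=
  Prod.map torusMk id (lagrangianPairsEquiv n z)

theorem torusPoint_apply (u v : LagrangianPair n) :
    torusPoint (u, v) = (torusMk (Sum.elim u.1 v.1), Sum.elim u.2 v.2) :=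
  rfl

theorem torusPoint_intCast_add_fst (k : n → ℤ) (u v : LagrangianPair n) :
    torusPoint (((fun i ↦ (k i : ℝ)), 0) + u, v) = torusPoint (u, v) := by
  have hsum : Sum.elim ((fun i ↦ (k i : ℝ)) + u.1) v.1 =
      (fun i ↦ ((Sum.elim k 0 i : ℤ) : ℝ)) + Sum.elim u.1 v.1 := by
    ext (i | i) <;> simp
  simp [torusPoint_apply, hsum, torusMk_intCast_add]

theorem torusPoint_intCast_add_snd (k : n → ℤ) (u v : LagrangianPair n) :
    torusPoint (u, ((fun i ↦ (k i : ℝ)), 0) + v) = torusPoint (u, v) := by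
  have hsum : Sum.elim u.1 ((fun i ↦ (k i : ℝ)) + v.1) =
      (fun i ↦ ((Sum.elim 0 k i : ℤ) : ℝ)) + Sum.elim u.1 v.1 := by
    ext (i | i) <;> simp
  simp [torusPoint_apply, hsum, torusMk_intCast_add]

theorem measurable_torusPoint [Finite n] : Measurable (torusPoint (n := n)) :=
  (measurable_torusMk.prodMap measurable_id).comp
    (LinearMap.continuous_of_finiteDimensional (lagrangianPairsEquiv n).toLinearMap).measurable

theorem ae_mem_of_ae_torusPoint_mem [Fintype n]
    {s : Set (UnitAddTorus (n ⊕ n) × (n ⊕ n → ℝ))} (hs : MeasurableSet s)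
    (h : ∀ᵐ z, torusPoint z ∈ s) : ∀ᵐ w, w ∈ s := by
  have hmeas : Measurable (Prod.map torusMk id : (n ⊕ n → ℝ) × (n ⊕ n → ℝ) → _) :=
    measurable_torusMk.prodMap measurable_id
  have hHaar : (volume : Measure (LagrangianPair n × LagrangianPair n)).IsAddHaarMeasure :=
    Measure.prod.instIsAddHaarMeasure volume volume
  have hreal : ∀ᵐ p : (n ⊕ n → ℝ) × (n ⊕ n → ℝ), Prod.map torusMk id p ∈ s :=
    (ae_comp_linearMap_mem_iff (lagrangianPairsEquiv n).toLinearMap volume volume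
      (lagrangianPairsEquiv n).surjective (hmeas hs)).1 h
  have hac : (volume : Measure (UnitAddTorus (n ⊕ n) × (n ⊕ n → ℝ))) ≪
      volume.map (Prod.map torusMk id) := by
    have := (volume_absolutelyContinuous_map_torusMk (ι := n ⊕ n)).prod
      (Measure.AbsolutelyContinuous.refl (volume.map (id : (n ⊕ n → ℝ) → _)))
    rwa [Measure.map_prod_map _ _ measurable_torusMk measurable_id, Measure.map_id] at this
  exact hac ((ae_map_iff hmeas.aemeasurable hs).2 hreal)

variable [Fintype n] [DecidableEq n]

theorem torusPoint_mulVec_add_fst (S : Matrix n n ℤ) (u v : LagrangianPair n) :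
    torusPoint ((S.map (Int.castRingHom ℝ) *ᵥ v.1, S.map (Int.castRingHom ℝ) *ᵥ v.2) + u, v) =
      (torusMk ((fromBlocks 1 S 0 1).map (Int.castRingHom ℝ) *ᵥ Sum.elim u.1 v.1),
        (fromBlocks 1 S 0 1).map (Int.castRingHom ℝ) *ᵥ Sum.elim u.2 v.2) := by
  simp [torusPoint_apply, fromBlocks_map, fromBlocks_mulVec, add_comm]

theorem torusPoint_mulVec_add_snd (S : Matrix n n ℤ) (u v : LagrangianPair n) :
    torusPoint (u, (S.map (Int.castRingHom ℝ) *ᵥ u.1, S.map (Int.castRingHom ℝ) *ᵥ u.2) + v) =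
      (torusMk ((fromBlocks 1 0 S 1).map (Int.castRingHom ℝ) *ᵥ Sum.elim u.1 v.1),
        (fromBlocks 1 0 S 1).map (Int.castRingHom ℝ) *ᵥ Sum.elim u.2 v.2) := by
  simp [torusPoint_apply, fromBlocks_map, fromBlocks_mulVec]

end Torus

theorem sp2gZ_action_on_torus_times_R2g_ergodic_general {n : Type*} [Fintype n] [DecidableEq n]
    [Nontrivial n] {A : Set (UnitAddTorus (n ⊕ n) × (n ⊕ n → ℝ))} (hA : MeasurableSet A)
    (hinv : ∀ M ∈ symplecticGroup n ℤ, ∀ x y : n ⊕ n → ℝ, (torusMk x, y) ∈ A ↔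
      (torusMk (M.map (Int.castRingHom ℝ) *ᵥ x), M.map (Int.castRingHom ℝ) *ᵥ y) ∈ A) :
    volume A = 0 ∨ volume Aᶜ = 0 := by
  have hconst : EventuallyConst (torusPoint ⁻¹' A) (ae volume) := by
    refine eventuallyConst_of_shearTranslations_le_stabilizer (measurable_torusPoint hA)
      (fun v ↦ shearTranslations_le_stabilizer (fun k u ↦ ?_) fun S hS u ↦ ?_)
      (fun u ↦ shearTranslations_le_stabilizer (fun k v ↦ ?_) fun S hS v ↦ ?_)
    · simp only [mem_preimage, torusPoint_intCast_add_fst]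
    · rw [mem_preimage, mem_preimage, torusPoint_mulVec_add_fst]
      exact (hinv _ (fromBlocks_one_self_zero_one_mem_symplecticGroup hS) _ _).symm
    · simp only [mem_preimage, torusPoint_intCast_add_snd]
    · rw [mem_preimage, mem_preimage, torusPoint_mulVec_add_snd]
      exact (hinv _ (fromBlocks_one_zero_self_one_mem_symplecticGroup hS) _ _).symm
  rcases eventuallyConst_set.1 hconst with hmem | hnotMem
  · exact Or.inr (ae_mem_of_ae_torusPoint_mem hA hmem)
  · exact Or.inl (measure_eq_zero_iff_ae_notMem.2 (ae_mem_of_ae_torusPoint_mem hA.compl hnotMem))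

/-- For `g ≥ 2`, the diagonal action of `Sp(2g, ℤ)` on `(ℝ/ℤ)^{2g} × ℝ^{2g}`,
where `M` sends `(x mod ℤ^{2g}, y)` to `(M x mod ℤ^{2g}, M y)`, is ergodic with respect
to the product of the Haar measure on the torus and the Lebesgue measure on `ℝ^{2g}`. -/
theorem sp2gZ_action_on_torus_times_R2g_ergodic (g : ℕ) (hg : 2 ≤ g)
    (A : Set (((Fin g ⊕ Fin g) → AddCircle (1 : ℝ)) × ((Fin g ⊕ Fin g) → ℝ)))
    (hA : MeasurableSet A)
    (hinv : ∀ M : Matrix (Fin g ⊕ Fin g) (Fin g ⊕ Fin g) ℝ,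
      (∀ i j, ∃ k : ℤ, M i j = (k : ℝ)) →
      Mᵀ * Matrix.J (Fin g) ℝ * M = Matrix.J (Fin g) ℝ →
      ∀ x y : (Fin g ⊕ Fin g) → ℝ,
        ((fun i => ((x i : ℝ) : AddCircle (1 : ℝ))), y) ∈ A ↔
          ((fun i => ((M.mulVec x i : ℝ) : AddCircle (1 : ℝ))), M.mulVec y) ∈ A) :
    volume A = 0 ∨ volume Aᶜ = 0 := by
  have : Nontrivial (Fin g) := Fin.nontrivial_iff_two_le.2 hg
  exact sp2gZ_action_on_torus_times_R2g_ergodic_general hA fun M hM x y ↦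
    hinv (M.map (Int.castRingHom ℝ)) (fun i j ↦ ⟨M i j, rfl⟩)
      (SymplecticGroup.mem_iff'.1 (map_mem_symplecticGroup _ hM)) x y
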